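/- arXiv:2005.03107 — 3 statements merged into one kernel-verified Lean document; each statement's English description precedes it below -/
import Mathlib

section
/- The subgroup W_n generated by β' and the scalar matrix ζ·I is a normal subgroup of the group V_n' generated by α' and β' inside the unitary group U_n. -/
open Matrix Complex

/-- `ζ = exp(2πi/n)`. -/
noncomputable def zetaC (n : ℕ) : ℂ := Complex.exp (2 * Real.pi * Complex.I / n)

/-- The cyclic permutation matrix `α'`, with `α'_{ij} = 1` iff `i ≡ j + 1 (mod n)`. -/
noncomputable def alphaM (n : ℕ) : Matrix (Fin n) (Fin n) ℂ :=
  fun i j => if (i : ℕ) = ((j : ℕ) + 1) % n then 1 else 0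

/-- The diagonal matrix `β' = diag(ζ, ζ², …, ζ^{n−1}, 1)`. -/
noncomputable def betaM (n : ℕ) : Matrix (Fin n) (Fin n) ℂ :=
  Matrix.diagonal fun i => zetaC n ^ ((i : ℕ) + 1)

/-- `α'` as an element of the unitary group. -/
noncomputable def aU (n : ℕ) (hA : alphaM n ∈ Matrix.unitaryGroup (Fin n) ℂ) :
    Matrix.unitaryGroup (Fin n) ℂ := ⟨alphaM n, hA⟩

/-- `β'` as an element of the unitary group. -/
noncomputable def bU (n : ℕ) (hB : betaM n ∈ Matrix.unitaryGroup (Fin n) ℂ) :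
    Matrix.unitaryGroup (Fin n) ℂ := ⟨betaM n, hB⟩

/-- The scalar matrix `ζ·I` as an element of the unitary group. -/
noncomputable def sU (n : ℕ)
    (hS : zetaC n • (1 : Matrix (Fin n) (Fin n) ℂ) ∈ Matrix.unitaryGroup (Fin n) ℂ) :
    Matrix.unitaryGroup (Fin n) ℂ := ⟨zetaC n • (1 : Matrix (Fin n) (Fin n) ℂ), hS⟩

/-- `V_n'`, the subgroup of `U_n` generated by `α'` and `β'`. -/
noncomputable def Vgrp (n : ℕ) (hA : alphaM n ∈ Matrix.unitaryGroup (Fin n) ℂ)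
    (hB : betaM n ∈ Matrix.unitaryGroup (Fin n) ℂ) :
    Subgroup (Matrix.unitaryGroup (Fin n) ℂ) :=
  Subgroup.closure {aU n hA, bU n hB}

/-- `W_n`, the subgroup of `U_n` generated by `β'` and the scalar matrix `ζ·I`. -/
noncomputable def Wgrp (n : ℕ) (hB : betaM n ∈ Matrix.unitaryGroup (Fin n) ℂ)
    (hS : zetaC n • (1 : Matrix (Fin n) (Fin n) ℂ) ∈ Matrix.unitaryGroup (Fin n) ℂ) :
    Subgroup (Matrix.unitaryGroup (Fin n) ℂ) :=
  Subgroup.closure {bU n hB, sU n hS}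

/-!
The relation `β'α' = ζ·α'β'` says that `ζ·I` is the commutator `⁅β', α'⁆`, so `W_n ≤ V_n'`. As `ζ·I`
commutes with `α'`, conjugation by `α'` replaces the generators `β'`, `ζ·I` of `W_n` by
`(ζ·I)⁻¹β'`, `ζ·I`, which generate the same subgroup. Hence `α'` and `β'` normalize `W_n`.
-/

open scoped commutatorElement

section CommutatorPair

open Subgroup

variable {G : Type*} [Group G]

theorem closure_pair_inv_mul_left (x y : G) :
    closure ({y⁻¹ * x, y} : Set G) = closure {x, y} := by
  apply le_antisymm <;> rw [closure_le, Set.pair_subset_iff]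
  · have hx : x ∈ closure {x, y} := mem_closure_of_mem (Set.mem_insert _ _)
    have hy : y ∈ closure {x, y} := mem_closure_of_mem (Set.mem_insert_of_mem _ rfl)
    exact ⟨mul_mem (inv_mem hy) hx, hy⟩
  · have hyx : y⁻¹ * x ∈ closure {y⁻¹ * x, y} := mem_closure_of_mem (Set.mem_insert _ _)
    have hy : y ∈ closure {y⁻¹ * x, y} := mem_closure_of_mem (Set.mem_insert_of_mem _ rfl)
    exact ⟨(mul_mem_cancel_left (inv_mem hy)).mp hyx, hy⟩

theorem closure_pair_commutatorElement_le (a b : G) :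
    closure {b, ⁅b, a⁆} ≤ closure {a, b} := by
  have ha : a ∈ closure {a, b} := mem_closure_of_mem (Set.mem_insert _ _)
  have hb : b ∈ closure {a, b} := mem_closure_of_mem (Set.mem_insert_of_mem _ rfl)
  rw [closure_le, Set.pair_subset_iff]
  exact ⟨hb, mul_mem (mul_mem (mul_mem hb ha) (inv_mem hb)) (inv_mem ha)⟩

theorem mem_normalizer_closure_pair_commutatorElement {a b : G} (h : Commute a ⁅b, a⁆) :
    a ∈ normalizer (closure {b, ⁅b, a⁆} : Set G) := by
  have conj_b : MulAut.conj a b = ⁅b, a⁆⁻¹ * b := by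
    rw [conj_eq_commutatorElement_mul, commutatorElement_inv]
  have conj_comm : MulAut.conj a ⁅b, a⁆ = ⁅b, a⁆ := by
    rw [MulAut.conj_apply, h.eq, mul_inv_cancel_right]
  rw [mem_normalizer_iff_map_conj_eq, MonoidHom.map_closure, MonoidHom.coe_coe, Set.image_pair,
    conj_b, conj_comm, closure_pair_inv_mul_left]

theorem closure_pair_commutatorElement_normal {a b : G} (h : Commute a ⁅b, a⁆) :
    ((closure {b, ⁅b, a⁆}).subgroupOf (closure {a, b})).Normal := by
  apply normal_subgroupOf_of_le_normalizer
  rw [closure_le, Set.pair_subset_iff]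
  exact ⟨mem_normalizer_closure_pair_commutatorElement h,
    le_normalizer (mem_closure_of_mem (Set.mem_insert _ _))⟩

end CommutatorPair

section ClockAndShiftMatrices

variable {n : ℕ}

theorem diagonal_pow_succ_mul_alphaM {z : ℂ} (hz : z ^ n = 1) :
    diagonal (fun i : Fin n => z ^ ((i : ℕ) + 1)) * alphaM n =
      z • (alphaM n * diagonal fun i : Fin n => z ^ ((i : ℕ) + 1)) := by
  ext i j
  rw [diagonal_mul, Matrix.smul_apply, mul_diagonal, alphaM, smul_eq_mul]
  split_ifs with hij
  · rw [mul_one, one_mul, pow_succ', hij, ← pow_eq_pow_mod _ hz]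
  · rw [mul_zero, zero_mul, mul_zero]

theorem zetaC_pow_self (hn : n ≠ 0) : zetaC n ^ n = 1 :=
  (isPrimitiveRoot_exp n hn).pow_eq_one

theorem commute_sU (hS : zetaC n • (1 : Matrix (Fin n) (Fin n) ℂ) ∈ unitaryGroup (Fin n) ℂ)
    (g : unitaryGroup (Fin n) ℂ) : Commute g (sU n hS) :=
  Subtype.ext ((Commute.one_right g.1).smul_right (zetaC n)).eq

theorem commutatorElement_bU_aU (hn : n ≠ 0)
    (hA : alphaM n ∈ unitaryGroup (Fin n) ℂ) (hB : betaM n ∈ unitaryGroup (Fin n) ℂ)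
    (hS : zetaC n • (1 : Matrix (Fin n) (Fin n) ℂ) ∈ unitaryGroup (Fin n) ℂ) :
    ⁅bU n hB, aU n hA⁆ = sU n hS := by
  have matrix_rel : betaM n * alphaM n = (zetaC n • 1) * (alphaM n * betaM n) := by
    rw [smul_one_mul]
    exact diagonal_pow_succ_mul_alphaM (zetaC_pow_self hn)
  have rel : bU n hB * aU n hA = sU n hS * (aU n hA * bU n hB) := Subtype.ext matrix_rel
  rw [commutatorElement_def, mul_inv_eq_iff_eq_mul, mul_inv_eq_iff_eq_mul, mul_assoc, rel]

end ClockAndShiftMatrices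

/-- `W_n` is a normal subgroup of `V_n'`. -/
theorem Wgrp_normal_in_Vgrp (n : ℕ) (hn : 1 < n)
    (hA : alphaM n ∈ Matrix.unitaryGroup (Fin n) ℂ)
    (hB : betaM n ∈ Matrix.unitaryGroup (Fin n) ℂ)
    (hS : zetaC n • (1 : Matrix (Fin n) (Fin n) ℂ) ∈ Matrix.unitaryGroup (Fin n) ℂ) :
    Wgrp n hB hS ≤ Vgrp n hA hB ∧
    ((Wgrp n hB hS).subgroupOf (Vgrp n hA hB)).Normal := by
  have commutator_eq : ⁅bU n hB, aU n hA⁆ = sU n hS :=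
    commutatorElement_bU_aU (Nat.ne_zero_of_lt hn) hA hB hS
  have commute : Commute (aU n hA) ⁅bU n hB, aU n hA⁆ := commutator_eq ▸ commute_sU hS (aU n hA)
  rw [Wgrp, Vgrp, ← commutator_eq]
  exact ⟨closure_pair_commutatorElement_le _ _, closure_pair_commutatorElement_normal commute⟩
end

section
/- The quotient group V_n'/W_n is cyclic of order n; it is isomorphic to ℤ/n, generated by the class of α'. -/
/-!
The quotient is generated by the class of `α'`, because the other generator `β'` of `V_n'` lies in
`W_n`; only the order of this class is at stake. All of `W_n` consists of diagonal matrices, while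
`α'` is the permutation matrix of an `n`-cycle, and a permutation matrix is diagonal only if it is
the identity. So `α'^k ∈ W_n` exactly when `n ∣ k`.
-/

open Matrix Complex

section Quotient

variable {G : Type*} [Group G] {N : Subgroup G} [N.Normal] {s : Set G} {a : G}

lemma zpowers_mk_eq_top (hs : Subgroup.closure s = ⊤) (hsN : ∀ x ∈ s, x = a ∨ x ∈ N) :
    Subgroup.zpowers (a : G ⧸ N) = ⊤ := by
  rw [eq_top_iff, ← Subgroup.map_top_of_surjective _ (QuotientGroup.mk'_surjective N), ← hs,
    MonoidHom.map_closure, Subgroup.closure_le, Set.image_subset_iff]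
  intro x hx
  rcases hsN x hx with rfl | hxN
  · exact Subgroup.mem_zpowers _
  · have hx_one : QuotientGroup.mk' N x = 1 := (QuotientGroup.eq_one_iff x).mpr hxN
    simp only [Set.mem_preimage, hx_one, SetLike.mem_coe, one_mem]

lemma orderOf_mk_eq_iff {n : ℕ} : orderOf (a : G ⧸ N) = n ↔ ∀ k : ℕ, a ^ k ∈ N ↔ n ∣ k := by
  simp only [← Nat.dvd_right_iff_eq, orderOf_dvd_iff_pow_eq_one, ← QuotientGroup.mk_pow,
    QuotientGroup.eq_one_iff]

lemma exists_quotient_mulEquiv_zmod {n : ℕ} (hs : Subgroup.closure s = ⊤)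
    (hsN : ∀ x ∈ s, x = a ∨ x ∈ N) (ha : ∀ k : ℕ, a ^ k ∈ N ↔ n ∣ k) :
    ∃ e : G ⧸ N ≃* Multiplicative (ZMod n), e (a : G ⧸ N) = Multiplicative.ofAdd 1 := by
  have hgen : Subgroup.zpowers (a : G ⧸ N) = ⊤ := zpowers_mk_eq_top hs hsN
  have hcard : Nat.card (G ⧸ N) = n :=
    (orderOf_eq_card_of_zpowers_eq_top hgen).symm.trans (orderOf_mk_eq_iff.mpr ha)
  exact ⟨(zmodMulEquivOfGenerator ((Subgroup.eq_top_iff' _).mp hgen) hcard).symm,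
    zmodMulEquivOfGenerator_symm_apply_generator _ _⟩

end Quotient

section Diagonal

variable {m R : Type*} [Fintype m]

lemma isDiag_mul [NonUnitalNonAssocSemiring R] {A B : Matrix m m R} (hA : A.IsDiag)
    (hB : B.IsDiag) : (A * B).IsDiag := by
  classical
  rw [← hA.diagonal_diag, ← hB.diagonal_diag, diagonal_mul_diagonal]
  exact isDiag_diagonal _

/-- The diagonal matrices in the unitary group, as a subgroup. It bounds `W_n` from above. -/
def diagonalUnitarySubgroup (m R : Type*) [Fintype m] [DecidableEq m] [CommRing R] [StarRing R] :
    Subgroup (unitaryGroup m R) where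
  carrier := {U | (U : Matrix m m R).IsDiag}
  one_mem' := isDiag_one
  mul_mem' := isDiag_mul
  inv_mem' := IsDiag.conjTranspose

lemma permMatrixHom_apply_apply [DecidableEq m] [NonAssocSemiring R] (σ : Equiv.Perm m)
    (i j : m) : (permMatrixHom σ : Matrix m m R) i j = if i = σ j then 1 else 0 := by
  simp [permMatrixHom_apply, PEquiv.toMatrix_apply, Equiv.symm_apply_eq]

lemma isDiag_permMatrixHom_iff [DecidableEq m] [NonAssocSemiring R] [Nontrivial R]
    {σ : Equiv.Perm m} : (permMatrixHom σ : Matrix m m R).IsDiag ↔ σ = 1 := by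
  refine ⟨fun h => Equiv.ext fun j => ?_, ?_⟩
  · by_contra hj
    simpa [permMatrixHom_apply_apply] using h hj
  · rintro rfl
    exact map_one (permMatrixHom (n := m) (R := R)) ▸ isDiag_one

end Diagonal

lemma orderOf_finRotate (n : ℕ) [NeZero n] : orderOf (finRotate n) = n := by
  obtain rfl | hn : n = 1 ∨ 2 ≤ n := by have := NeZero.pos n; lia
  · rw [Subsingleton.elim (finRotate 1) 1, orderOf_one]
  · rw [(isCycle_finRotate_of_le hn).orderOf, support_finRotate_of_le hn, Finset.card_fin]

lemma alphaM_eq_permMatrixHom (n : ℕ) : alphaM n = permMatrixHom (finRotate n) := by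
  ext i j
  have : NeZero n := i.neZero
  simp [alphaM, permMatrixHom_apply_apply, Fin.ext_iff, Fin.val_add]

section Generators

variable {n : ℕ} (hA : alphaM n ∈ unitaryGroup (Fin n) ℂ) (hB : betaM n ∈ unitaryGroup (Fin n) ℂ)
  (hS : zetaC n • (1 : Matrix (Fin n) (Fin n) ℂ) ∈ unitaryGroup (Fin n) ℂ)

lemma bU_mem_Wgrp : bU n hB ∈ Wgrp n hB hS :=
  Subgroup.subset_closure (Set.mem_insert _ _)

lemma Wgrp_le_diagonalUnitarySubgroup : Wgrp n hB hS ≤ diagonalUnitarySubgroup (Fin n) ℂ := by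
  refine (Subgroup.closure_le _).mpr ?_
  rintro _ (rfl | rfl)
  · exact isDiag_diagonal _
  · exact isDiag_smul_one _ _

lemma coe_aU_pow (k : ℕ) : (aU n hA ^ k).val = permMatrixHom (finRotate n ^ k) := by
  rw [map_pow, ← alphaM_eq_permMatrixHom]
  rfl

lemma aU_pow_mem_Wgrp_iff [NeZero n] (k : ℕ) : aU n hA ^ k ∈ Wgrp n hB hS ↔ n ∣ k := by
  have hdvd : n ∣ k ↔ finRotate n ^ k = 1 := by
    rw [← orderOf_dvd_iff_pow_eq_one, orderOf_finRotate]
  rw [hdvd]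
  constructor
  · intro hW
    have hdiag : (aU n hA ^ k).val.IsDiag := Wgrp_le_diagonalUnitarySubgroup hB hS hW
    rwa [coe_aU_pow, isDiag_permMatrixHom_iff] at hdiag
  · intro hrot
    have hone : aU n hA ^ k = 1 := Subtype.ext <| by
      rw [coe_aU_pow, hrot, map_one, OneMemClass.coe_one]
    exact hone ▸ one_mem _

end Generators

/-- the quotient `V_n'/W_n` is cyclic of order `n`, isomorphic to `ℤ/n` with the
class of `α'` mapping to the generator. -/
theorem Vgrp_quotient_Wgrp_iso (n : ℕ) (hn : 1 < n)
    (hA : alphaM n ∈ Matrix.unitaryGroup (Fin n) ℂ)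
    (hB : betaM n ∈ Matrix.unitaryGroup (Fin n) ℂ)
    (hS : zetaC n • (1 : Matrix (Fin n) (Fin n) ℂ) ∈ Matrix.unitaryGroup (Fin n) ℂ)
    [hN : ((Wgrp n hB hS).subgroupOf (Vgrp n hA hB)).Normal] :
    ∃ e : (Vgrp n hA hB ⧸ (Wgrp n hB hS).subgroupOf (Vgrp n hA hB)) ≃*
        Multiplicative (ZMod n),
      e (QuotientGroup.mk
          (⟨aU n hA, Subgroup.subset_closure (Set.mem_insert _ _)⟩ : Vgrp n hA hB)) =
        Multiplicative.ofAdd (1 : ZMod n) := by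
  have : NeZero n := ⟨by lia⟩
  refine exists_quotient_mulEquiv_zmod Subgroup.closure_closure_coe_preimage ?_
    fun k => aU_pow_mem_Wgrp_iff hA hB hS k
  rintro ⟨x, hx⟩ (rfl | rfl)
  · exact Or.inl rfl
  · exact Or.inr (bU_mem_Wgrp hB hS)
end

section
/- The group V_n' generated by α' and β' in the unitary group U_n is a finite group of order n³. -/
open Matrix Complex

/-!
The commutator `⁅β', α'⁆` is the scalar `ζ`, which is central of order `n`, so every element of
`⟨β', α'⟩` is a word `β' ^ i * α' ^ j * ζ ^ k`. The commutators of this word with `β'` and `α'` are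
`ζ ^ j` and `ζ ^ i`: they recover `i` and `j` modulo `n`, and then the word itself recovers `k`
modulo `n`. As `α' ^ n = β' ^ n = 1`, these residues also determine the word.
-/

open scoped commutatorElement

section CentralCommutator

variable {G : Type*} [Group G] {g h : G}

lemma zpow_eq_zpow_of_orderOf_dvd {H : Type*} [Group H] {x : G} {y : H}
    (hxy : orderOf y ∣ orderOf x) {m n : ℤ} (hx : x ^ m = x ^ n) : y ^ m = y ^ n :=
  zpow_eq_zpow_iff_modEq.2 <|
    (zpow_eq_zpow_iff_modEq.1 hx).of_dvd (Int.natCast_dvd_natCast.2 hxy)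

lemma commutatorElement_zpow_right (hh : Commute ⁅g, h⁆ h) (k : ℤ) : ⁅g, h ^ k⁆ = ⁅g, h⁆ ^ k := by
  have conj_h : g * h * g⁻¹ = ⁅g, h⁆ * h := by rw [commutatorElement_def]; group
  rw [commutatorElement_def, ← conj_zpow, conj_h, hh.mul_zpow, mul_inv_cancel_right]

lemma commutatorElement_zpow_left (hg : Commute ⁅g, h⁆ g) (k : ℤ) : ⁅g ^ k, h⁆ = ⁅g, h⁆ ^ k := by
  have hg' : Commute ⁅h, g⁆ g := by simpa [commutatorElement_inv] using hg.inv_left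
  rw [← commutatorElement_inv, commutatorElement_zpow_right hg', ← _root_.inv_zpow,
    commutatorElement_inv]

lemma orderOf_commutatorElement_dvd_left (hg : Commute ⁅g, h⁆ g) : orderOf ⁅g, h⁆ ∣ orderOf g := by
  rw [orderOf_dvd_iff_pow_eq_one, ← zpow_natCast, ← commutatorElement_zpow_left hg, zpow_natCast,
    pow_orderOf_eq_one, commutatorElement_one_left]

lemma orderOf_commutatorElement_dvd_right (hh : Commute ⁅g, h⁆ h) :
    orderOf ⁅g, h⁆ ∣ orderOf h := by
  rw [orderOf_dvd_iff_pow_eq_one, ← zpow_natCast, ← commutatorElement_zpow_right hh, zpow_natCast,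
    pow_orderOf_eq_one, commutatorElement_one_right]

lemma commutatorElement_zpow_zpow (hg : Commute ⁅g, h⁆ g) (hh : Commute ⁅g, h⁆ h) (i j : ℤ) :
    ⁅g ^ i, h ^ j⁆ = ⁅g, h⁆ ^ (i * j) := by
  have hgj : Commute ⁅g, h ^ j⁆ g := by
    rw [commutatorElement_zpow_right hh]
    exact hg.zpow_left j
  rw [commutatorElement_zpow_left hgj, commutatorElement_zpow_right hh, ← _root_.zpow_mul, mul_comm]

lemma zpow_mul_zpow_eq_mul_commutatorElement_zpow (hg : Commute ⁅g, h⁆ g)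
    (hh : Commute ⁅g, h⁆ h) (i j : ℤ) :
    h ^ j * g ^ i = g ^ i * h ^ j * ⁅g, h⁆ ^ (-(i * j)) := by
  have swap : h ^ j * g ^ i = ⁅g ^ i, h ^ j⁆⁻¹ * (g ^ i * h ^ j) := by
    rw [commutatorElement_def]
    group
  rw [swap, commutatorElement_zpow_zpow hg hh, ← _root_.zpow_neg]
  exact ((hg.zpow_zpow _ _).mul_right (hh.zpow_zpow _ _)).eq

/-- The word `g ^ i * h ^ j * ⁅g, h⁆ ^ k`. When `⁅g, h⁆` commutes with `g` and `h`, this is the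
normal form of the elements of `⟨g, h⟩`, with the triple of exponents an element of the integral
Heisenberg group. -/
def heisenbergWord (g h : G) (i j k : ℤ) : G := g ^ i * h ^ j * ⁅g, h⁆ ^ k

lemma heisenbergWord_mul (hg : Commute ⁅g, h⁆ g) (hh : Commute ⁅g, h⁆ h) (i j k i' j' k' : ℤ) :
    heisenbergWord g h i j k * heisenbergWord g h i' j' k' =
      heisenbergWord g h (i + i') (j + j') (k + k' - i' * j) := by
  have central_k : Commute (⁅g, h⁆ ^ k) (g ^ i' * h ^ j') :=
    (hg.zpow_zpow k i').mul_right (hh.zpow_zpow k j')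
  have central_ij : Commute (⁅g, h⁆ ^ (-(i' * j))) (h ^ j') := hh.zpow_zpow _ _
  calc heisenbergWord g h i j k * heisenbergWord g h i' j' k'
      = g ^ i * h ^ j * (⁅g, h⁆ ^ k * (g ^ i' * h ^ j')) * ⁅g, h⁆ ^ k' := by
        simp only [heisenbergWord, mul_assoc]
    _ = g ^ i * (h ^ j * g ^ i') * h ^ j' * ⁅g, h⁆ ^ k * ⁅g, h⁆ ^ k' := by
        rw [central_k.eq]
        simp only [mul_assoc]
    _ = g ^ i * g ^ i' * h ^ j * (⁅g, h⁆ ^ (-(i' * j)) * h ^ j') * ⁅g, h⁆ ^ k * ⁅g, h⁆ ^ k' := by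
        rw [zpow_mul_zpow_eq_mul_commutatorElement_zpow hg hh]
        simp only [mul_assoc]
    _ = heisenbergWord g h (i + i') (j + j') (k + k' - i' * j) := by
        rw [central_ij.eq, heisenbergWord]
        group

lemma heisenbergWord_inv (hg : Commute ⁅g, h⁆ g) (hh : Commute ⁅g, h⁆ h) (i j k : ℤ) :
    (heisenbergWord g h i j k)⁻¹ = heisenbergWord g h (-i) (-j) (-k - i * j) := by
  rw [inv_eq_iff_mul_eq_one, heisenbergWord_mul hg hh]
  have exponent_z : k + (-k - i * j) - -i * j = 0 := by ring
  rw [exponent_z]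
  simp [heisenbergWord]

lemma mem_closure_pair_iff_heisenbergWord (hg : Commute ⁅g, h⁆ g) (hh : Commute ⁅g, h⁆ h) {x : G} :
    x ∈ Subgroup.closure {g, h} ↔ ∃ i j k, heisenbergWord g h i j k = x := by
  constructor
  · intro hx
    induction hx using Subgroup.closure_induction with
    | mem x hx =>
      rcases hx with rfl | rfl
      · exact ⟨1, 0, 0, by simp [heisenbergWord]⟩
      · exact ⟨0, 1, 0, by simp [heisenbergWord]⟩
    | one => exact ⟨0, 0, 0, by simp [heisenbergWord]⟩
    | mul x y _ _ hx hy =>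
      obtain ⟨i, j, k, rfl⟩ := hx
      obtain ⟨i', j', k', rfl⟩ := hy
      exact ⟨_, _, _, (heisenbergWord_mul hg hh i j k i' j' k').symm⟩
    | inv x _ hx =>
      obtain ⟨i, j, k, rfl⟩ := hx
      exact ⟨_, _, _, (heisenbergWord_inv hg hh i j k).symm⟩
  · rintro ⟨i, j, k, rfl⟩
    have g_mem : g ∈ Subgroup.closure {g, h} := Subgroup.subset_closure (by simp)
    have h_mem : h ∈ Subgroup.closure {g, h} := Subgroup.subset_closure (by simp)
    have commutator_mem : ⁅g, h⁆ ∈ Subgroup.closure {g, h} :=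
      mul_mem (mul_mem (mul_mem g_mem h_mem) (inv_mem g_mem)) (inv_mem h_mem)
    exact mul_mem (mul_mem (zpow_mem g_mem i) (zpow_mem h_mem j)) (zpow_mem commutator_mem k)

lemma commutatorElement_heisenbergWord_right (hg : Commute ⁅g, h⁆ g) (hh : Commute ⁅g, h⁆ h)
    (i j k : ℤ) : ⁅g, heisenbergWord g h i j k⁆ = ⁅g, h⁆ ^ j := by
  have commute_gi : Commute g (g ^ i) := Commute.self_zpow g i
  have commute_gz : Commute g (⁅g, h⁆ ^ k) := hg.symm.zpow_right k
  rw [heisenbergWord, commutatorElement_mul_right_eq_mul_conj,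
    commutatorElement_mul_right_eq_mul_conj, commutatorElement_eq_one_iff_commute.2 commute_gi,
    commutatorElement_eq_one_iff_commute.2 commute_gz, commutatorElement_zpow_right hh,
    one_mul, mul_one, mul_inv_cancel_right, (hg.zpow_zpow j i).symm.eq, mul_inv_cancel_right]

lemma commutatorElement_heisenbergWord_left (hg : Commute ⁅g, h⁆ g) (hh : Commute ⁅g, h⁆ h)
    (i j k : ℤ) : ⁅heisenbergWord g h i j k, h⁆ = ⁅g, h⁆ ^ i := by
  have commute_hj : Commute (h ^ j) h := Commute.zpow_self h j
  have commute_zh : Commute (⁅g, h⁆ ^ k) h := hh.zpow_left k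
  rw [heisenbergWord, mul_assoc, commutatorElement_mul_left_eq_conj_mul,
    commutatorElement_eq_one_iff_commute.2 (commute_hj.mul_left commute_zh),
    commutatorElement_zpow_left hg, mul_one, mul_inv_cancel, one_mul]

lemma heisenbergWord_eq_iff (hg : Commute ⁅g, h⁆ g) (hh : Commute ⁅g, h⁆ h)
    (hgz : orderOf g ∣ orderOf ⁅g, h⁆) (hhz : orderOf h ∣ orderOf ⁅g, h⁆) {i j k i' j' k' : ℤ} :
    heisenbergWord g h i j k = heisenbergWord g h i' j' k' ↔
      g ^ i = g ^ i' ∧ h ^ j = h ^ j' ∧ ⁅g, h⁆ ^ k = ⁅g, h⁆ ^ k' := by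
  constructor
  · intro hw
    have hi : g ^ i = g ^ i' := zpow_eq_zpow_of_orderOf_dvd hgz <| by
      simpa only [commutatorElement_heisenbergWord_left hg hh] using congrArg (⁅·, h⁆) hw
    have hj : h ^ j = h ^ j' := zpow_eq_zpow_of_orderOf_dvd hhz <| by
      simpa only [commutatorElement_heisenbergWord_right hg hh] using congrArg (⁅g, ·⁆) hw
    rw [heisenbergWord, heisenbergWord, hi, hj] at hw
    exact ⟨hi, hj, mul_left_cancel hw⟩
  · rintro ⟨hi, hj, hk⟩
    rw [heisenbergWord, heisenbergWord, hi, hj, hk]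

theorem card_closure_pair_of_commute_commutatorElement (hg : Commute ⁅g, h⁆ g)
    (hh : Commute ⁅g, h⁆ h) (hgz : orderOf g ∣ orderOf ⁅g, h⁆) (hhz : orderOf h ∣ orderOf ⁅g, h⁆) :
    Nat.card (Subgroup.closure {g, h}) = orderOf ⁅g, h⁆ ^ 3 := by
  have orderOf_g : orderOf g = orderOf ⁅g, h⁆ :=
    Nat.dvd_antisymm hgz (orderOf_commutatorElement_dvd_left hg)
  have orderOf_h : orderOf h = orderOf ⁅g, h⁆ :=
    Nat.dvd_antisymm hhz (orderOf_commutatorElement_dvd_right hh)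
  let f (p : Subgroup.zpowers g × Subgroup.zpowers h × Subgroup.zpowers ⁅g, h⁆) : G :=
    p.1 * p.2.1 * p.2.2
  have f_injective : Function.Injective f := by
    rintro ⟨⟨_, i, rfl⟩, ⟨_, j, rfl⟩, ⟨_, k, rfl⟩⟩ ⟨⟨_, i', rfl⟩, ⟨_, j', rfl⟩, ⟨_, k', rfl⟩⟩ hf
    simpa only [Prod.mk.injEq, Subtype.ext_iff] using (heisenbergWord_eq_iff hg hh hgz hhz).1 hf
  have range_f : Set.range f = Subgroup.closure {g, h} := by
    ext x
    simp [f, mem_closure_pair_iff_heisenbergWord hg hh, heisenbergWord]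
  calc Nat.card (Subgroup.closure {g, h})
      = Nat.card (Set.range f) := by rw [range_f]; rfl
    _ = orderOf g * (orderOf h * orderOf ⁅g, h⁆) := by
        simp only [Nat.card_range_of_injective f_injective, Nat.card_prod, Nat.card_zpowers]
    _ = orderOf ⁅g, h⁆ ^ 3 := by rw [orderOf_g, orderOf_h]; ring

end CentralCommutator

lemma alphaM_apply (n : ℕ) [NeZero n] (i j : Fin n) :
    alphaM n i j = if i = j + 1 then 1 else 0 := by
  simp [alphaM, Fin.ext_iff, Fin.val_add]

lemma alphaM_pow_apply (n : ℕ) [NeZero n] (m : ℕ) (i j : Fin n) :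
    (alphaM n ^ m) i j = if i = j + m • 1 then 1 else 0 := by
  induction m generalizing i with
  | zero => simp [Matrix.one_apply]
  | succ m ih =>
    simp [pow_succ', Matrix.mul_apply, alphaM_apply, ih, succ_nsmul, add_assoc]

lemma alphaM_pow_self (n : ℕ) [NeZero n] : alphaM n ^ n = 1 := by
  have n_nsmul_one : n • (1 : Fin n) = 0 := by simpa using card_nsmul_eq_zero (x := (1 : Fin n))
  ext i j
  rw [alphaM_pow_apply, n_nsmul_one, add_zero, Matrix.one_apply]

lemma isPrimitiveRoot_zetaC (n : ℕ) [NeZero n] : IsPrimitiveRoot (zetaC n) n :=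
  Complex.isPrimitiveRoot_exp n (NeZero.ne n)

lemma betaM_pow_self (n : ℕ) [NeZero n] : betaM n ^ n = 1 := by
  rw [betaM, Matrix.diagonal_pow, ← Matrix.diagonal_one]
  congr 1
  ext i
  rw [Pi.pow_apply, pow_right_comm, (isPrimitiveRoot_zetaC n).pow_eq_one, one_pow]

lemma betaM_mul_alphaM (n : ℕ) [NeZero n] :
    betaM n * alphaM n = zetaC n • (alphaM n * betaM n) := by
  ext r s
  rw [betaM, Matrix.diagonal_mul, Matrix.smul_apply, Matrix.mul_diagonal, alphaM]
  split_ifs with hr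
  · rw [hr, pow_succ, ← pow_eq_pow_mod _ (isPrimitiveRoot_zetaC n).pow_eq_one, smul_eq_mul]
    ring
  · simp

section Generators

variable {n : ℕ} [NeZero n] {hA : alphaM n ∈ Matrix.unitaryGroup (Fin n) ℂ}
  {hB : betaM n ∈ Matrix.unitaryGroup (Fin n) ℂ}

lemma coe_commutatorElement_bU_aU :
    ((⁅bU n hB, aU n hA⁆ : Matrix.unitaryGroup (Fin n) ℂ) : Matrix (Fin n) (Fin n) ℂ) =
      zetaC n • 1 := by
  have coe_ba : ((bU n hB * aU n hA : Matrix.unitaryGroup (Fin n) ℂ) : Matrix (Fin n) (Fin n) ℂ) =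
      zetaC n • ↑(aU n hA * bU n hB) := betaM_mul_alphaM n
  rw [commutatorElement_def, mul_assoc, ← _root_.mul_inv_rev, Submonoid.coe_mul, coe_ba,
    smul_mul_assoc, ← Submonoid.coe_mul, mul_inv_cancel, Submonoid.coe_one]

lemma commute_commutatorElement_bU_aU (U : Matrix.unitaryGroup (Fin n) ℂ) :
    Commute ⁅bU n hB, aU n hA⁆ U :=
  Subtype.ext <| by simp [coe_commutatorElement_bU_aU]

lemma orderOf_commutatorElement_bU_aU : orderOf ⁅bU n hB, aU n hA⁆ = n := by
  rw [← orderOf_submonoid, coe_commutatorElement_bU_aU, ← Algebra.algebraMap_eq_smul_one]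
  exact (orderOf_injective (algebraMap ℂ (Matrix (Fin n) (Fin n) ℂ)).toMonoidHom
    (FaithfulSMul.algebraMap_injective _ _) _).trans (isPrimitiveRoot_zetaC n).eq_orderOf.symm

end Generators

/-- the group `V_n'` is a finite group of order `n³`. -/
theorem Vgrp_card (n : ℕ) (hn : 1 < n)
    (hA : alphaM n ∈ Matrix.unitaryGroup (Fin n) ℂ)
    (hB : betaM n ∈ Matrix.unitaryGroup (Fin n) ℂ) :
    Finite (Vgrp n hA hB) ∧ Nat.card (Vgrp n hA hB) = n ^ 3 := by
  have : NeZero n := ⟨by omega⟩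
  have orderOf_bU_dvd : orderOf (bU n hB) ∣ orderOf ⁅bU n hB, aU n hA⁆ := by
    rw [orderOf_commutatorElement_bU_aU]
    exact orderOf_dvd_of_pow_eq_one (Subtype.ext (betaM_pow_self n))
  have orderOf_aU_dvd : orderOf (aU n hA) ∣ orderOf ⁅bU n hB, aU n hA⁆ := by
    rw [orderOf_commutatorElement_bU_aU]
    exact orderOf_dvd_of_pow_eq_one (Subtype.ext (alphaM_pow_self n))
  have card_eq : Nat.card (Vgrp n hA hB) = n ^ 3 := by
    rw [Vgrp, Set.pair_comm, card_closure_pair_of_commute_commutatorElement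
      (commute_commutatorElement_bU_aU _) (commute_commutatorElement_bU_aU _)
      orderOf_bU_dvd orderOf_aU_dvd, orderOf_commutatorElement_bU_aU]
  exact ⟨Nat.finite_of_card_ne_zero (card_eq ▸ pow_ne_zero 3 (NeZero.ne n)), card_eq⟩
end
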